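/- Let m > 3 be an integer. There is a constant C (depending on m) such that for every locally absolutely continuous z : (0,∞) → ℂ with ‖z‖_X < ∞, with z'/ρ and z/ρ² in L²(ρ dρ), and satisfying the orthogonality condition ∫₀^∞ z(ρ) h₁(ρ) ρ dρ = 0, one has ‖ |z'|/ρ + |z|/ρ² ‖_{L²(ρ dρ)} ≤ C ‖(L₀ z)/ρ‖_{L²(ρ dρ)}. -/

import Mathlib

open MeasureTheory Set Real Filter
open scoped ENNReal

noncomputable section

abbrev V3 := Fin 3 → ℝ
abbrev V2 := Fin 2 → ℝ

/-- cross product in ℝ³ -/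
def cross3 (a b : V3) : V3 :=
  ![a 1 * b 2 - a 2 * b 1, a 2 * b 0 - a 0 * b 2, a 0 * b 1 - a 1 * b 0]

/-- dot product in ℝ³ -/
def dot3 (a b : V3) : ℝ := a 0 * b 0 + a 1 * b 1 + a 2 * b 2

/-- squared euclidean norm in ℝ³ -/
def nsq3 (a : V3) : ℝ := a 0 ^ 2 + a 1 ^ 2 + a 2 ^ 2

/-- the generator R of rotations about the x₃-axis -/
def Rv (a : V3) : V3 := ![-a 1, a 0, 0]

/-- the rotation e^{αR} about the x₃-axis -/
def rotZ (α : ℝ) (a : V3) : V3 :=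
  ![Real.cos α * a 0 - Real.sin α * a 1, Real.sin α * a 0 + Real.cos α * a 1, a 2]

def kHat : V3 := ![0, 0, 1]
def negkHat : V3 := ![0, 0, -1]
def jHat : V3 := ![0, 1, 0]

/-- first component of the harmonic map profile -/
def h1f (m : ℕ) (r : ℝ) : ℝ := 2 / (r ^ (m : ℤ) + r ^ (-(m : ℤ)))

/-- third component of the harmonic map profile -/
def h3f (m : ℕ) (r : ℝ) : ℝ := (r ^ (m : ℤ) - r ^ (-(m : ℤ))) / (r ^ (m : ℤ) + r ^ (-(m : ℤ)))

/-- the harmonic map profile h -/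
def hProf (m : ℕ) (r : ℝ) : V3 := ![h1f m r, 0, h3f m r]

/-- the r-derivative of the harmonic map profile -/
def dhProf (m : ℕ) (r : ℝ) : V3 :=
  ![-((m : ℝ) / r) * h1f m r * h3f m r, 0, ((m : ℝ) / r) * (h1f m r) ^ 2]

/-- profile of the harmonic map e^{(mθ+α)R} h(r/s) -/
def harmP (m : ℕ) (s α : ℝ) (r : ℝ) : V3 := rotZ α (hProf m (r / s))

/-- its r-derivative -/
def dharmP (m : ℕ) (s α : ℝ) (r : ℝ) : V3 := fun i => (1 / s) * rotZ α (dhProf m (r / s)) i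

/-- `v` is locally absolutely continuous on (0,∞), with a.e. derivative `dv`. -/
def LocAC (v dv : ℝ → V3) : Prop :=
  (∀ a b : ℝ, 0 < a → a ≤ b → ∀ i, IntervalIntegrable (fun r => dv r i) volume a b) ∧
  (∀ a b : ℝ, 0 < a → a ≤ b → ∀ i, v b i - v a i = ∫ r in a..b, dv r i)

/-- energy density (w.r.t. dr) of the m-equivariant map with profile (v,dv) -/
def eDen (m : ℕ) (v dv : ℝ → V3) (r : ℝ) : ℝ :=
  (nsq3 (dv r) + ((m : ℝ) ^ 2 / r ^ 2) * ((v r 0) ^ 2 + (v r 1) ^ 2)) * r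

/-- the energy E(u) = (1/2)∫|∇u|² of the m-equivariant map with profile (v,dv) -/
def energy (m : ℕ) (v dv : ℝ → V3) : ℝ := π * ∫ r in Ioi (0:ℝ), eDen m v dv r

/-- membership in the class Σ_m, expressed in terms of the profile (v,dv) -/
def InSigma (m : ℕ) (v dv : ℝ → V3) : Prop :=
  LocAC v dv ∧ (∀ r ∈ Ioi (0:ℝ), nsq3 (v r) = 1) ∧
  IntegrableOn (eDen m v dv) (Ioi (0:ℝ)) ∧
  Tendsto v (nhdsWithin 0 (Ioi 0)) (nhds negkHat) ∧
  Tendsto v atTop (nhds kHat)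

/-- squared Ḣ¹(ℝ²) distance between the m-equivariant maps with profiles (v,dv), (w,dw) -/
def dH1sq (m : ℕ) (v dv w dw : ℝ → V3) : ℝ :=
  2 * π * ∫ r in Ioi (0:ℝ),
    (nsq3 (fun i => dv r i - dw r i)
      + ((m : ℝ) ^ 2 / r ^ 2) * ((v r 0 - w r 0) ^ 2 + (v r 1 - w r 1) ^ 2)) * r

/-- Ḣ¹(ℝ²) distance -/
def dH1 (m : ℕ) (v dv w dw : ℝ → V3) : ℝ := Real.sqrt (dH1sq m v dv w dw)

/-- the polar angle of a point of ℝ² -/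
def angleOf (x : V2) : ℝ := Complex.arg ⟨x 0, x 1⟩

/-- the radius of a point of ℝ² -/
def radOf (x : V2) : ℝ := Real.sqrt ((x 0) ^ 2 + (x 1) ^ 2)

/-- the m-equivariant map u(r,θ) = e^{mθR} v(r) -/
def eqMap (m : ℕ) (v : ℝ → V3) (x : V2) : V3 := rotZ ((m : ℝ) * angleOf x) (v (radOf x))

/-- the spatial gradient ∂_j u of the m-equivariant map with profile (v,dv) -/
def eqGrad (m : ℕ) (v dv : ℝ → V3) (x : V2) (j : Fin 2) : V3 :=
  rotZ ((m : ℝ) * angleOf x) (fun i =>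
    (x j / radOf x) * dv (radOf x) i
      + ((m : ℝ) * (if j = 0 then -(x 1) else x 0) / radOf x ^ 2) * Rv (v (radOf x)) i)

/-- weak (distributional) form of the Schrödinger map equation ∂ₜu = u × Δu on the time
interval I, for the m-equivariant map with time-dependent profile (v,dv):
∫∫ { u·φ_t - Σ_j (u × ∂_j u)·∂_j φ } dx dt = 0 for all C¹ compactly supported φ. -/
def WeakSM (m : ℕ) (I : Set ℝ) (v dv : ℝ → ℝ → V3) : Prop :=
  ∀ φ : ℝ → V2 → V3,
    (∀ i, ContDiff ℝ 1 (fun q : ℝ × V2 => φ q.1 q.2 i)) →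
    (∀ i, HasCompactSupport (fun q : ℝ × V2 => φ q.1 q.2 i)) →
    (∀ t, t ∉ interior I → ∀ x, φ t x = 0) →
    (∫ t in I, ∫ x : V2,
      (dot3 (eqMap m (v t) x) (fun i => deriv (fun τ => φ τ x i) t)
        - ∑ j : Fin 2, dot3 (cross3 (eqMap m (v t) x) (eqGrad m (v t) (dv t) x j))
            (fun i => fderiv ℝ (fun y => φ t y i) x (Pi.single j 1)))) = 0

/-- continuity in t of the map t ↦ u(t) with respect to the Ḣ¹ distance, on I -/
def H1Cont (m : ℕ) (I : Set ℝ) (v dv : ℝ → ℝ → V3) : Prop :=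
  ∀ t₀ ∈ I, ∀ ε > (0:ℝ), ∃ η > (0:ℝ), ∀ t ∈ I, |t - t₀| < η →
    dH1 m (v t) (dv t) (v t₀) (dv t₀) < ε

/-- a weak solution of the Schrödinger map equation in the class C(I; Σ_m), with
initial profile v₀ -/
def SolClass (m : ℕ) (I : Set ℝ) (v dv : ℝ → ℝ → V3) (v₀ : ℝ → V3) : Prop :=
  (∀ r ∈ Ioi (0:ℝ), v 0 r = v₀ r) ∧ WeakSM m I v dv ∧
  (∀ t ∈ I, InSigma m (v t) (dv t)) ∧ H1Cont m I v dv

/-- the profile of Δu for the m-equivariant map u with profile (v,dv,ddv):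
Δu = e^{mθR}( v_rr + v_r/r + (m²/r²) R² v ) -/
def lapP (m : ℕ) (v dv ddv : ℝ → V3) (r : ℝ) : V3 := fun i =>
  ddv r i + dv r i / r + ((m : ℝ) ^ 2 / r ^ 2) * (![-(v r 0), -(v r 1), 0] : V3) i

/-- squared Ḣ² distance (via the Laplacian) -/
def dH2sq (m : ℕ) (v dv ddv w dw ddw : ℝ → V3) : ℝ :=
  2 * π * ∫ r in Ioi (0:ℝ), nsq3 (fun i => lapP m v dv ddv r i - lapP m w dw ddw r i) * r


/-- `z` is locally absolutely continuous on (0,∞), with a.e. derivative `dz`. -/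
def LocACC (z dz : ℝ → ℂ) : Prop :=
  (∀ a b : ℝ, 0 < a → a ≤ b → IntervalIntegrable dz volume a b) ∧
  (∀ a b : ℝ, 0 < a → a ≤ b → z b - z a = ∫ ρ in a..b, dz ρ)

/-- the density (w.r.t. dρ) of the squared X-norm: (|z'|² + |z|²/ρ²) ρ -/
def xDen (z dz : ℝ → ℂ) (ρ : ℝ) : ℝ := (‖dz ρ‖ ^ 2 + ‖z ρ‖ ^ 2 / ρ ^ 2) * ρ

/-- the X-norm ‖z‖_X = (∫ (|z'|² + |z|²/ρ²) ρ dρ)^{1/2} -/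
def normX (z dz : ℝ → ℂ) : ℝ := Real.sqrt (∫ ρ in Ioi (0:ℝ), xDen z dz ρ)

/-- the operator L₀ = ∂_ρ + (m/ρ) h₃(ρ) -/
def L0op (m : ℕ) (z dz : ℝ → ℂ) (ρ : ℝ) : ℂ :=
  dz ρ + ((((m : ℝ) / ρ) * h3f m ρ : ℝ) : ℂ) * z ρ

/-- The reciprocal of `h1f`, namely `(r ^ m + r ^ (-m)) / 2`. -/
def h1fInv (m : ℕ) (r : ℝ) : ℝ := (r ^ m + (r ^ m)⁻¹) / 2

lemma h1fInv_pos {m : ℕ} {r : ℝ} (hr : 0 < r) : 0 < h1fInv m r := by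
  unfold h1fInv; positivity

lemma h1fInv_one (m : ℕ) : h1fInv m 1 = 1 := by simp [h1fInv]

lemma h1f_eq_inv (m : ℕ) (r : ℝ) : h1f m r = (h1fInv m r)⁻¹ := by
  simp [h1f, h1fInv]

lemma h1f_pos {m : ℕ} {r : ℝ} (hr : 0 < r) : 0 < h1f m r := by
  rw [h1f_eq_inv]; exact inv_pos.mpr (h1fInv_pos hr)

lemma abs_h3f_le_one (m : ℕ) {r : ℝ} (hr : 0 < r) : |h3f m r| ≤ 1 := by
  have h : 0 < r ^ m := by positivity
  have h' : 0 < (r ^ m)⁻¹ := by positivity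
  simp only [h3f, zpow_natCast, zpow_neg]
  rw [abs_div, abs_of_pos (add_pos h h'), div_le_one (add_pos h h'), abs_le]
  constructor <;> linarith

lemma hasDerivAt_h1fInv (m : ℕ) {r : ℝ} (hr : 0 < r) :
    HasDerivAt (h1fInv m) ((m / r) * h3f m r * h1fInv m r) r := by
  have h1 := hasDerivAt_pow m r
  have h2 := (h1.add (h1.inv (by positivity))).div_const 2
  refine HasDerivAt.congr_deriv (f := h1fInv m) h2 ?_
  have h : r ^ m + (r ^ m)⁻¹ ≠ 0 := by positivity
  have hp : (m : ℝ) * r ^ (m - 1) = m / r * r ^ m := by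
    rcases m with _ | m
    · simp
    · simp only [Nat.add_sub_cancel, pow_succ]; field_simp
  simp only [h3f, h1fInv, zpow_natCast, zpow_neg, hp]
  rw [mul_assoc, div_mul_div_comm, mul_comm (_ - _), mul_div_mul_left _ _ h]
  field_simp
  ring

lemma continuousOn_h1fInv (m : ℕ) : ContinuousOn (h1fInv m) (Ioi 0) := fun _ hr =>
  (hasDerivAt_h1fInv m hr).continuousAt.continuousWithinAt

lemma continuousOn_h1f (m : ℕ) : ContinuousOn (h1f m) (Ioi 0) := by
  have : h1f m = fun r => (h1fInv m r)⁻¹ := funext (h1f_eq_inv m)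
  rw [this]
  exact (continuousOn_h1fInv m).inv₀ fun r hr => (h1fInv_pos hr).ne'

lemma continuousOn_h3f (m : ℕ) : ContinuousOn (h3f m) (Ioi 0) := by
  unfold h3f
  have h1 : ContinuousOn (fun r : ℝ => r ^ (m : ℤ)) (Ioi 0) := by
    simp only [zpow_natCast]; fun_prop
  have h2 : ContinuousOn (fun r : ℝ => r ^ (-(m : ℤ))) (Ioi 0) := by
    simp only [zpow_neg]
    exact h1.inv₀ fun r hr => (zpow_pos hr _).ne'
  refine (h1.sub h2).div (h1.add h2) fun r hr => ?_
  exact (add_pos (zpow_pos hr _) (zpow_pos hr _)).ne'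

lemma h1fInv_le_of_one_le {m : ℕ} {s r : ℝ} (hs : 1 ≤ s) (hsr : s ≤ r) :
    h1fInv m s ≤ h1fInv m r := by
  have ha : 1 ≤ s ^ m := one_le_pow₀ hs
  have hab : s ^ m ≤ r ^ m := pow_le_pow_left₀ (by linarith) hsr m
  unfold h1fInv
  have h0 : 0 < s ^ m := by linarith
  have h1 : 0 < r ^ m := by linarith
  have : r ^ m + (r ^ m)⁻¹ - (s ^ m + (s ^ m)⁻¹)
      = (r ^ m - s ^ m) * (s ^ m * r ^ m - 1) / (s ^ m * r ^ m) := by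
    field_simp; ring
  have h2 : 0 ≤ (r ^ m - s ^ m) * (s ^ m * r ^ m - 1) / (s ^ m * r ^ m) :=
    div_nonneg (mul_nonneg (by linarith) (by nlinarith)) (by positivity)
  linarith

lemma sq_mul_h1fInv_le {m : ℕ} (hm : 2 ≤ m) {s r : ℝ} (hr : 0 < r) (hrs : r ≤ s) (hs : s ≤ 1) :
    s ^ 2 * h1fInv m s ≤ 2 * r ^ 2 * h1fInv m r := by
  have hs0 : 0 < s := hr.trans_le hrs
  obtain ⟨k, rfl⟩ := Nat.exists_eq_add_of_le hm
  have h1 : h1fInv (2 + k) s ≤ (s ^ (2 + k))⁻¹ := by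
    have h : s ^ (2 + k) ≤ 1 := pow_le_one₀ hs0.le hs
    have h' : 1 ≤ (s ^ (2 + k))⁻¹ := (one_le_inv₀ (by positivity)).mpr h
    unfold h1fInv; linarith
  have h2 : (r ^ (2 + k))⁻¹ ≤ 2 * h1fInv (2 + k) r := by
    have : 0 < r ^ (2 + k) := by positivity
    unfold h1fInv; linarith
  have h3 : (s ^ k)⁻¹ ≤ (r ^ k)⁻¹ :=
    inv_anti₀ (by positivity) (pow_le_pow_left₀ hr.le hrs k)
  calc s ^ 2 * h1fInv (2 + k) s ≤ s ^ 2 * (s ^ (2 + k))⁻¹ := by gcongr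
    _ = (s ^ k)⁻¹ := by rw [pow_add]; field_simp
    _ ≤ (r ^ k)⁻¹ := h3
    _ = r ^ 2 * (r ^ (2 + k))⁻¹ := by rw [pow_add]; field_simp
    _ ≤ r ^ 2 * (2 * h1fInv (2 + k) r) := by gcongr
    _ = _ := by ring

lemma h1f_le_of_le_one {m : ℕ} (hm : 3 < m) {r : ℝ} (hr : 0 < r) (hr1 : r ≤ 1) :
    h1f m r ≤ 2 * r ^ 4 := by
  have h : r ^ m ≤ r ^ 4 := pow_le_pow_of_le_one hr.le hr1 hm
  rw [h1f_eq_inv]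
  refine inv_le_of_inv_le₀ (by positivity) ?_
  have h2 : (r ^ 4)⁻¹ ≤ (r ^ m)⁻¹ := inv_anti₀ (by positivity) h
  have h3 : 0 < r ^ m := by positivity
  rw [mul_inv]
  unfold h1fInv; linarith

lemma h1f_le_of_one_le {m : ℕ} (hm : 3 < m) {r : ℝ} (hr : 1 ≤ r) :
    h1f m r ≤ 2 * (r ^ 4)⁻¹ := by
  have h : r ^ 4 ≤ r ^ m := pow_le_pow_right₀ hr hm
  have h0 : 0 < r := by linarith
  rw [h1f_eq_inv]
  refine inv_le_of_inv_le₀ (by positivity) ?_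
  have h3 : 0 < (r ^ m)⁻¹ := by positivity
  rw [mul_inv, inv_inv]
  unfold h1fInv; linarith

/-- A function on `(0, ∞)` dominated by a constant near `0` and by `r ^ (-2)` near infinity
is integrable. -/
lemma integrableOn_Ioi_of_bounds {f : ℝ → ℝ} (hf : ContinuousOn f (Ioi 0))
    (h0 : ∀ r, 0 < r → r ≤ 1 → |f r| ≤ 4) (h1 : ∀ r, 1 ≤ r → |f r| ≤ 4 * (r ^ 2)⁻¹) :
    IntegrableOn f (Ioi 0) := by
  have hmeas := hf.aestronglyMeasurable (μ := volume) measurableSet_Ioi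
  rw [← Ioc_union_Ioi_eq_Ioi (zero_le_one' ℝ), integrableOn_union]
  constructor
  · refine Integrable.mono' (integrableOn_const (C := (4 : ℝ)) (by simp))
      (hmeas.mono_set Ioc_subset_Ioi_self) ?_
    exact (ae_restrict_mem measurableSet_Ioc).mono fun r hr => h0 r hr.1 hr.2
  · have hi : IntegrableOn (fun r : ℝ => 4 * (r ^ 2)⁻¹) (Ioi 1) := by
      refine Integrable.const_mul ?_ 4
      refine (integrableOn_Ioi_rpow_of_lt (a := -2) (by norm_num) one_pos).congr_fun
        (fun r hr => ?_) measurableSet_Ioi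
      have : (0 : ℝ) < r := one_pos.trans hr
      change r ^ (-2 : ℝ) = (r ^ 2)⁻¹
      rw [Real.rpow_neg this.le]; norm_num
    refine Integrable.mono' hi (hmeas.mono_set (Ioi_subset_Ioi zero_le_one)) ?_
    exact (ae_restrict_mem measurableSet_Ioi).mono fun r hr => h1 r (le_of_lt hr)

lemma integrableOn_h1f_mul_sq {m : ℕ} (hm : 3 < m) :
    IntegrableOn (fun r => r ^ 2 * h1f m r) (Ioi 0) := by
  refine integrableOn_Ioi_of_bounds ((continuous_pow 2).continuousOn.mul (continuousOn_h1f m))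
    (fun r h0 h1 => ?_) (fun r h1 => ?_)
  · have := h1f_le_of_le_one hm h0 h1
    have hp := h1f_pos (m := m) h0
    rw [abs_of_pos (by positivity)]
    have h4 : r ^ 4 ≤ 1 := pow_le_one₀ h0.le h1
    have h2 : r ^ 2 ≤ 1 := pow_le_one₀ h0.le h1
    nlinarith
  · have h0 : 0 < r := by linarith
    have := h1f_le_of_one_le hm h1
    have hp := h1f_pos (m := m) h0
    rw [abs_of_pos (by positivity)]
    calc r ^ 2 * h1f m r ≤ r ^ 2 * (2 * (r ^ 4)⁻¹) := by gcongr
      _ = 2 * (r ^ 2)⁻¹ := by field_simp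
      _ ≤ _ := by have : 0 < (r ^ 2)⁻¹ := by positivity
                  linarith

lemma integrableOn_h1f_sq_mul {m : ℕ} (hm : 3 < m) :
    IntegrableOn (fun r => h1f m r ^ 2 * r) (Ioi 0) := by
  refine integrableOn_Ioi_of_bounds (((continuousOn_h1f m).pow 2).mul continuousOn_id)
    (fun r h0 h1 => ?_) (fun r h1 => ?_)
  · have := h1f_le_of_le_one hm h0 h1
    have hp := h1f_pos (m := m) h0
    rw [abs_of_pos (by positivity)]
    have h4 : r ^ 4 ≤ 1 := pow_le_one₀ h0.le h1
    nlinarith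
  · have h0 : 0 < r := by linarith
    have := h1f_le_of_one_le hm h1
    have hp := h1f_pos (m := m) h0
    rw [abs_of_pos (by positivity)]
    calc h1f m r ^ 2 * r ≤ (2 * (r ^ 4)⁻¹) ^ 2 * r := by gcongr
      _ = 4 * (r ^ 2)⁻¹ * (r ^ 5)⁻¹ := by field_simp; norm_num
      _ ≤ 4 * (r ^ 2)⁻¹ * 1 := by
          gcongr
          exact inv_le_one_of_one_le₀ (one_le_pow₀ h1)
      _ = _ := mul_one _

lemma integrableOn_h1f_sq_div {m : ℕ} (hm : 3 < m) :
    IntegrableOn (fun r => h1f m r ^ 2 / r ^ 3) (Ioi 0) := by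
  refine integrableOn_Ioi_of_bounds (((continuousOn_h1f m).pow 2).div
    (continuous_pow 3).continuousOn fun r hr => (pow_pos hr 3).ne')
    (fun r h0 h1 => ?_) (fun r h1 => ?_)
  · have := h1f_le_of_le_one hm h0 h1
    have hp := h1f_pos (m := m) h0
    rw [abs_of_pos (by positivity)]
    calc h1f m r ^ 2 / r ^ 3 ≤ (2 * r ^ 4) ^ 2 / r ^ 3 := by gcongr
      _ = 4 * r ^ 5 := by field_simp; norm_num
      _ ≤ 4 * 1 := by gcongr; exact pow_le_one₀ h0.le h1
      _ = 4 := mul_one _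
  · have h0 : 0 < r := by linarith
    have := h1f_le_of_one_le hm h1
    have hp := h1f_pos (m := m) h0
    rw [abs_of_pos (by positivity)]
    calc h1f m r ^ 2 / r ^ 3 ≤ (2 * (r ^ 4)⁻¹) ^ 2 / r ^ 3 := by gcongr
      _ = 4 * (r ^ 2)⁻¹ * (r ^ 9)⁻¹ := by field_simp; norm_num
      _ ≤ 4 * (r ^ 2)⁻¹ * 1 := by
          gcongr
          exact inv_le_one_of_one_le₀ (one_le_pow₀ h1)
      _ = _ := mul_one _

/-- Product rule, in integrated form, for a `C¹` function and a real-valued primitive of an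
integrable function. -/
lemma integral_mul_primitive {φ φ' f df : ℝ → ℝ} {a b : ℝ} (hab : a ≤ b)
    (hφ : ∀ x ∈ Icc a b, HasDerivAt φ (φ' x) x) (hφ' : ContinuousOn φ' (Icc a b))
    (hdf : IntervalIntegrable df volume a b)
    (hf : ∀ x ∈ Icc a b, f x - f a = ∫ t in a..x, df t) :
    ∫ x in a..b, (φ' x * f x + φ x * df x) = φ b * f b - φ a * f a := by
  set F : ℝ → ℝ := fun x => f a + ∫ t in a..x, df t with hF
  have hFf : ∀ x ∈ Icc a b, F x = f x := fun x hx => by rw [hF]; simp only; linarith [hf x hx]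
  have huIcc : uIcc a b = Icc a b := uIcc_of_le hab
  have hφAC : AbsolutelyContinuousOnInterval φ a b := by
    obtain ⟨K, hK⟩ := isCompact_Icc.exists_bound_of_continuousOn hφ'
    refine LipschitzOnWith.absolutelyContinuousOnInterval (K := K.toNNReal) ?_
    rw [huIcc]
    refine (convex_Icc a b).lipschitzOnWith_of_nnnorm_hasDerivWithin_le
      (fun x hx => (hφ x hx).hasDerivWithinAt) fun x hx => ?_
    exact NNReal.le_toNNReal_of_coe_le (hK x hx)
  have hFAC : AbsolutelyContinuousOnInterval F a b := by
    have h1 := hdf.absolutelyContinuousOnInterval_intervalIntegral (c := a) left_mem_uIcc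
    have h2 : AbsolutelyContinuousOnInterval (fun _ : ℝ => f a) a b :=
      contDiffOn_const.absolutelyContinuousOnInterval
    exact h2.add h1
  have key := hφAC.integral_deriv_mul_eq_sub hFAC
  rw [hFf b (right_mem_Icc.mpr hab), hFf a (left_mem_Icc.mpr hab)] at key
  rw [← key]
  refine intervalIntegral.integral_congr_ae ?_
  filter_upwards [hdf.ae_hasDerivAt_integral] with x hx hxm
  have hx' : x ∈ uIcc a b := uIoc_subset_uIcc hxm
  have h1 : deriv F x = df x := ((hx hx' a left_mem_uIcc).const_add (f a)).deriv
  rw [huIcc] at hx'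
  rw [(hφ x hx').deriv, hFf x hx', h1]

lemma integral_h1fInv_mul_L0op {m : ℕ} {z dz : ℝ → ℂ} (hz : LocACC z dz) {a b : ℝ}
    (ha : 0 < a) (hab : a ≤ b) :
    ∫ r in a..b, (h1fInv m r : ℂ) * L0op m z dz r = h1fInv m b * z b - h1fInv m a * z a := by
  have hpos : ∀ x ∈ Icc a b, 0 < x := fun x hx => ha.trans_le hx.1
  have hsub : Icc a b ⊆ Ioi 0 := hpos
  have hφ : ∀ x ∈ Icc a b, HasDerivAt (h1fInv m) (m / x * h3f m x * h1fInv m x) x :=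
    fun x hx => hasDerivAt_h1fInv m (hpos x hx)
  have hφ' : ContinuousOn (fun x => m / x * h3f m x * h1fInv m x) (Icc a b) :=
    ((continuousOn_const.div continuousOn_id fun x hx => (hpos x hx).ne').mul
      ((continuousOn_h3f m).mono hsub)).mul ((continuousOn_h1fInv m).mono hsub)
  have hd := hz.1 a b ha hab
  have hdre : IntervalIntegrable (fun x => (dz x).re) volume a b := ⟨hd.1.re, hd.2.re⟩
  have hdim : IntervalIntegrable (fun x => (dz x).im) volume a b := ⟨hd.1.im, hd.2.im⟩
  have hcz : ContinuousOn z (uIcc a b) := by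
    have h1 := intervalIntegral.continuousOn_primitive_interval' hd left_mem_uIcc
    refine (continuousOn_const (c := z a)).add h1 |>.congr fun x hx => ?_
    rw [uIcc_of_le hab] at hx
    simp [← hz.2 a x ha hx.1]
  have hint : IntervalIntegrable (fun r => (h1fInv m r : ℂ) * L0op m z dz r) volume a b := by
    have hu := uIcc_of_le hab
    unfold L0op
    refine IntervalIntegrable.continuousOn_mul (hd.add ?_) ?_
    · refine ContinuousOn.intervalIntegrable (ContinuousOn.mul ?_ hcz)
      rw [hu]
      refine Complex.continuous_ofReal.comp_continuousOn ?_
      exact (continuousOn_const.div continuousOn_id fun x hx => (hpos x hx).ne').mul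
        ((continuousOn_h3f m).mono hsub)
    · rw [hu]
      exact Complex.continuous_ofReal.comp_continuousOn ((continuousOn_h1fInv m).mono hsub)
  have hre := integral_mul_primitive (f := fun x => (z x).re) hab hφ hφ' hdre fun x hx => by
    have := congrArg Complex.re (hz.2 a x ha hx.1)
    rw [Complex.sub_re] at this
    rw [this]
    exact (Complex.reCLM.intervalIntegral_comp_comm (hz.1 a x ha hx.1)).symm
  have him := integral_mul_primitive (f := fun x => (z x).im) hab hφ hφ' hdim fun x hx => by
    have := congrArg Complex.im (hz.2 a x ha hx.1)
    rw [Complex.sub_im] at this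
    rw [this]
    exact (Complex.imCLM.intervalIntegral_comp_comm (hz.1 a x ha hx.1)).symm
  have ere := Complex.reCLM.intervalIntegral_comp_comm hint
  have eim := Complex.imCLM.intervalIntegral_comp_comm hint
  simp only [Complex.reCLM_apply, Complex.imCLM_apply] at ere eim
  apply Complex.ext
  · rw [← ere, Complex.sub_re, Complex.re_ofReal_mul, Complex.re_ofReal_mul, ← hre]
    congr 1; ext x
    rw [Complex.re_ofReal_mul, L0op, Complex.add_re, Complex.re_ofReal_mul]; ring
  · rw [← eim, Complex.sub_im, Complex.im_ofReal_mul, Complex.im_ofReal_mul, ← him]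
    congr 1; ext x
    rw [Complex.im_ofReal_mul, L0op, Complex.add_im, Complex.im_ofReal_mul]; ring

lemma LocACC.continuousOn {z dz : ℝ → ℂ} (hz : LocACC z dz) : ContinuousOn z (Ioi 0) := by
  intro x (hx : 0 < x)
  have hd := hz.1 (x / 2) (2 * x) (by linarith) (by linarith)
  have h1 := intervalIntegral.continuousOn_primitive_interval' hd left_mem_uIcc
  rw [uIcc_of_le (by linarith)] at h1
  have h2 : ContinuousOn z (Icc (x / 2) (2 * x)) :=
    ((continuousOn_const (c := z (x / 2))).add h1).congr fun y hy => by
      simp [← hz.2 (x / 2) y (by linarith) hy.1]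
  exact (h2.continuousAt (Icc_mem_nhds (by linarith) (by linarith))).continuousWithinAt

lemma LocACC.aestronglyMeasurable {z dz : ℝ → ℂ} (hz : LocACC z dz) :
    AEStronglyMeasurable dz (volume.restrict (Ioi 0)) := by
  refine LocallyIntegrableOn.aestronglyMeasurable fun x (hx : 0 < x) => ?_
  have hd := hz.1 (x / 2) (2 * x) (by linarith) (by linarith)
  rw [intervalIntegrable_iff_integrableOn_Icc_of_le (by linarith)] at hd
  exact ⟨_, mem_nhdsWithin_of_mem_nhds (Icc_mem_nhds (by linarith) (by linarith)), hd⟩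

lemma LocACC.aestronglyMeasurable_L0op {z dz : ℝ → ℂ} (m : ℕ) (hz : LocACC z dz) :
    AEStronglyMeasurable (L0op m z dz) (volume.restrict (Ioi 0)) := by
  refine hz.aestronglyMeasurable.add (ContinuousOn.aestronglyMeasurable ?_ measurableSet_Ioi)
  refine ContinuousOn.mul (Complex.continuous_ofReal.comp_continuousOn ?_) hz.continuousOn
  exact (continuousOn_const.div continuousOn_id fun x (hx : 0 < x) => hx.ne').mul
    (continuousOn_h3f m)

/-- Cauchy–Schwarz inequality for real integrals. -/
lemma sq_integral_mul_le {α : Type*} [MeasurableSpace α] {μ : Measure α} {f g : α → ℝ}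
    (hf0 : 0 ≤ᵐ[μ] f) (hg0 : 0 ≤ᵐ[μ] g) (hf : MemLp f 2 μ) (hg : MemLp g 2 μ) :
    (∫ x, f x * g x ∂μ) ^ 2 ≤ (∫ x, f x ^ 2 ∂μ) * ∫ x, g x ^ 2 ∂μ := by
  have h := integral_mul_le_Lp_mul_Lq_of_nonneg Real.HolderConjugate.two_two hf0 hg0
    (by simpa using hf) (by simpa using hg)
  simp only [Real.rpow_two, ← Real.sqrt_eq_rpow] at h
  have h0 : 0 ≤ ∫ x, f x * g x ∂μ := by
    refine integral_nonneg_of_ae ?_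
    filter_upwards [hf0, hg0] with x h1 h2 using mul_nonneg h1 h2
  refine (pow_le_pow_left₀ h0 h 2).trans_eq ?_
  rw [mul_pow, Real.sq_sqrt (integral_nonneg fun x => sq_nonneg _),
    Real.sq_sqrt (integral_nonneg fun x => sq_nonneg _)]

/-- One-sided Schur test for nonnegative kernels. -/
lemma lintegral_lintegral_kernel_le {α : Type*} [MeasurableSpace α] {μ : Measure α} [SFinite μ]
    {K : α → α → ℝ≥0∞} (hK : Measurable (Function.uncurry K)) {F : α → ℝ≥0∞}
    (hF : AEMeasurable F μ) {c : ℝ≥0∞} (hc : ∀ᵐ s ∂μ, ∫⁻ r, K r s ∂μ ≤ c) :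
    ∫⁻ r, ∫⁻ s, K r s * F s ∂μ ∂μ ≤ c * ∫⁻ s, F s ∂μ := by
  rw [lintegral_lintegral_swap (hK.aemeasurable.mul hF.comp_snd), ← lintegral_const_mul'' _ hF]
  refine lintegral_mono_ae ?_
  filter_upwards [hc] with s hs
  have : Measurable fun r => K r s := hK.comp measurable_prodMk_right
  rw [lintegral_mul_const _ this]
  gcongr

/-- The kernel of the Hardy-type inequality `lintegral_le_of_hardy_bounds`. -/
def hardyKernel (r s : ℝ) : ℝ :=
  if 1 < s ∧ s ≤ r then s * (r ^ 2)⁻¹ else if r < s ∧ s ≤ 1 then 4 * s⁻¹ else 0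

lemma measurable_hardyKernel : Measurable (Function.uncurry hardyKernel) := by
  unfold hardyKernel Function.uncurry
  refine Measurable.ite ?_ (by fun_prop) (Measurable.ite ?_ (by fun_prop) measurable_const)
  · exact (measurableSet_lt measurable_const measurable_snd).inter
      (measurableSet_le measurable_snd measurable_fst)
  · exact (measurableSet_lt measurable_fst measurable_snd).inter
      (measurableSet_le measurable_snd measurable_const)

lemma lintegral_hardyKernel_le {s : ℝ} (hs : 0 < s) :
    ∫⁻ r in Ioi (0 : ℝ), ENNReal.ofReal (hardyKernel r s) ≤ 4 := by
  by_cases h1 : 1 < s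
  · have hi : IntegrableOn (fun r : ℝ => r ^ (-2 : ℝ)) (Ioi s) :=
      integrableOn_Ioi_rpow_of_lt (by norm_num) hs
    have hv : ∫ r in Ioi s, s * r ^ (-2 : ℝ) = 1 := by
      rw [integral_const_mul, integral_Ioi_rpow_of_lt (by norm_num) hs]
      norm_num [Real.rpow_neg_one]
      field_simp
    calc ∫⁻ r in Ioi (0 : ℝ), ENNReal.ofReal (hardyKernel r s)
        = ∫⁻ r in Ioi (0 : ℝ), (Ici s).indicator
            (fun r => ENNReal.ofReal (s * r ^ (-2 : ℝ))) r := by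
          refine setLIntegral_congr_fun measurableSet_Ioi fun r (hr : 0 < r) => ?_
          by_cases hsr : s ≤ r
          · simp [hardyKernel, h1, hsr]
          · simp [hardyKernel, hsr, not_le.mpr h1]
      _ ≤ ∫⁻ r, (Ici s).indicator (fun r => ENNReal.ofReal (s * r ^ (-2 : ℝ))) r :=
          setLIntegral_le_lintegral _ _
      _ = ∫⁻ r in Ioi s, ENNReal.ofReal (s * r ^ (-2 : ℝ)) := by
          rw [lintegral_indicator measurableSet_Ici, setLIntegral_congr Ioi_ae_eq_Ici]
      _ = ENNReal.ofReal (∫ r in Ioi s, s * r ^ (-2 : ℝ)) := by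
          refine (ofReal_integral_eq_lintegral_ofReal (hi.const_mul s) ?_).symm
          exact (ae_restrict_mem measurableSet_Ioi).mono fun r (hr : s < r) =>
            mul_nonneg hs.le (Real.rpow_nonneg (hs.trans hr).le _)
      _ ≤ 4 := by rw [hv]; norm_num
  · calc ∫⁻ r in Ioi (0 : ℝ), ENNReal.ofReal (hardyKernel r s)
        ≤ ∫⁻ r in Ioi (0 : ℝ), (Iio s).indicator (fun _ => ENNReal.ofReal (4 * s⁻¹)) r := by
          refine lintegral_mono fun r => ?_
          by_cases hrs : r < s
          · simp [hardyKernel, h1, hrs, not_lt.mp h1]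
          · simp [hardyKernel, h1, hrs]
      _ = ENNReal.ofReal (4 * s⁻¹) * ENNReal.ofReal s := by
          rw [lintegral_indicator_const measurableSet_Iio, Measure.restrict_apply measurableSet_Iio,
            Iio_inter_Ioi, Real.volume_Ioo, sub_zero]
      _ = 4 := by
          rw [← ENNReal.ofReal_mul (by positivity), inv_mul_cancel_right₀ hs.ne']
          norm_num

lemma ofReal_integral_le_lintegral {α : Type*} [MeasurableSpace α] {μ : Measure α} {f : α → ℝ}
    (hf : 0 ≤ᵐ[μ] f) : ENNReal.ofReal (∫ x, f x ∂μ) ≤ ∫⁻ x, ENNReal.ofReal (f x) ∂μ := by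
  by_cases h : Integrable f μ
  · exact (ofReal_integral_eq_lintegral_ofReal h hf).le
  · simp [integral_undef h]

/-- A Hardy-type inequality on `(0, ∞)`, split at `r = 1`. -/
lemma lintegral_le_of_hardy_bounds {U G : ℝ → ℝ} (hG : IntegrableOn G (Ioi 0))
    (hG0 : ∀ s, 0 < s → 0 ≤ G s)
    (h1 : ∀ r, 1 < r → U r ≤ ∫ s in Ioc 1 r, s * (r ^ 2)⁻¹ * G s)
    (h0 : ∀ r, 0 < r → r ≤ 1 → U r ≤ ∫ s in Ioc r 1, 4 * s⁻¹ * G s) :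
    ∫⁻ r in Ioi (0 : ℝ), ENNReal.ofReal (U r)
      ≤ 4 * ENNReal.ofReal (∫ s in Ioi (0 : ℝ), G s) := by
  have hGae : 0 ≤ᵐ[volume.restrict (Ioi 0)] G :=
    (ae_restrict_mem measurableSet_Ioi).mono hG0
  have aux : ∀ r a b : ℝ, 0 ≤ a → ∀ k : ℝ → ℝ,
      (∀ s ∈ Ioc a b, hardyKernel r s = k s ∧ 0 ≤ k s) →
      ENNReal.ofReal (∫ s in Ioc a b, k s * G s) ≤
        ∫⁻ s in Ioi (0 : ℝ), ENNReal.ofReal (hardyKernel r s) * ENNReal.ofReal (G s) := by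
    intro r a b ha k hk
    calc ENNReal.ofReal (∫ s in Ioc a b, k s * G s)
        ≤ ∫⁻ s in Ioc a b, ENNReal.ofReal (k s * G s) :=
          ofReal_integral_le_lintegral <| (ae_restrict_mem measurableSet_Ioc).mono
            fun s hs => mul_nonneg (hk s hs).2 (hG0 s (ha.trans_lt hs.1))
      _ = ∫⁻ s in Ioc a b, ENNReal.ofReal (hardyKernel r s) * ENNReal.ofReal (G s) :=
          setLIntegral_congr_fun measurableSet_Ioc fun s hs => by
            simp only [(hk s hs).1, ENNReal.ofReal_mul (hk s hs).2]
      _ ≤ _ := lintegral_mono_set fun s hs => ha.trans_lt hs.1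
  calc ∫⁻ r in Ioi (0 : ℝ), ENNReal.ofReal (U r)
      ≤ ∫⁻ r in Ioi (0 : ℝ), ∫⁻ s in Ioi (0 : ℝ),
          ENNReal.ofReal (hardyKernel r s) * ENNReal.ofReal (G s) := by
        refine setLIntegral_mono' measurableSet_Ioi fun r (hr : 0 < r) => ?_
        rcases lt_or_ge 1 r with hr1 | hr1
        · refine (ENNReal.ofReal_le_ofReal (h1 r hr1)).trans (aux r 1 r zero_le_one _ ?_)
          intro s hs
          have : 0 < s := one_pos.trans hs.1
          exact ⟨if_pos ⟨hs.1, hs.2⟩, by positivity⟩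
        · refine (ENNReal.ofReal_le_ofReal (h0 r hr hr1)).trans (aux r r 1 hr.le _ ?_)
          intro s hs
          have : 0 < s := hr.trans hs.1
          refine ⟨?_, by positivity⟩
          rw [hardyKernel, if_neg fun h => absurd hs.2 (not_le.mpr h.1), if_pos ⟨hs.1, hs.2⟩]
    _ ≤ 4 * ∫⁻ s in Ioi (0 : ℝ), ENNReal.ofReal (G s) :=
        lintegral_lintegral_kernel_le (K := fun r s => ENNReal.ofReal (hardyKernel r s))
          (ENNReal.measurable_ofReal.comp measurable_hardyKernel) hG.1.aemeasurable.ennreal_ofReal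
          ((ae_restrict_mem measurableSet_Ioi).mono fun s hs => lintegral_hardyKernel_le hs)
    _ = 4 * ENNReal.ofReal (∫ s in Ioi (0 : ℝ), G s) := by
        rw [ofReal_integral_eq_lintegral_ofReal hG hGae]

section Remainder

variable {m : ℕ} {z dz : ℝ → ℂ}

lemma h1fInv_mul_sub (hz : LocACC z dz) {r : ℝ} (hr : 0 < r) :
    (h1fInv m r : ℂ) * (z r - h1f m r * z 1) = ∫ s in (1)..r, (h1fInv m s : ℂ) * L0op m z dz s := by
  have h : (h1fInv m r : ℂ) * (h1f m r : ℂ) = 1 := by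
    rw [h1f_eq_inv, ← Complex.ofReal_mul, mul_inv_cancel₀ (h1fInv_pos hr).ne', Complex.ofReal_one]
  rw [mul_sub, ← mul_assoc, h, one_mul]
  rcases le_total 1 r with h1 | h1
  · rw [integral_h1fInv_mul_L0op hz one_pos h1, h1fInv_one]; simp
  · rw [intervalIntegral.integral_symm, integral_h1fInv_mul_L0op hz hr h1, h1fInv_one]; simp

lemma memLp_weighted_L0op (hz : LocACC z dz)
    (hG : IntegrableOn (fun s => (‖L0op m z dz s‖ / s) ^ 2 * s) (Ioi 0))
    {a b : ℝ} (ha : 0 < a) {w : ℝ → ℝ} (hw : ContinuousOn w (Ioi 0)) :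
    MemLp (fun s => w s * ‖L0op m z dz s‖) 2 (volume.restrict (Ioc a b)) := by
  have hsub : Ioc a b ⊆ Ioi 0 := fun s hs => ha.trans hs.1
  have hsub' : Icc a b ⊆ Ioi 0 := fun s hs => ha.trans_le hs.1
  have hmeas : AEStronglyMeasurable (fun s => w s * ‖L0op m z dz s‖) (volume.restrict (Ioc a b)) :=
    ((hw.aestronglyMeasurable measurableSet_Ioi).mul
      (hz.aestronglyMeasurable_L0op m).norm).mono_set hsub
  refine (memLp_two_iff_integrable_sq hmeas).mpr ?_
  have h := ((hG.mono_set hsub').continuousOn_mul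
    (((hw.pow 2).mul continuousOn_id).mono hsub') isCompact_Icc).mono_set Ioc_subset_Icc_self
  refine h.congr_fun (fun s hs => ?_) measurableSet_Ioc
  have : 0 < s := hsub hs
  simp only [Pi.mul_apply, Pi.pow_apply, id]
  field_simp

lemma norm_sq_remainder_le_of_one_le (hz : LocACC z dz)
    (hG : IntegrableOn (fun s => (‖L0op m z dz s‖ / s) ^ 2 * s) (Ioi 0))
    {r : ℝ} (hr : 1 ≤ r) :
    ‖z r - h1f m r * z 1‖ ^ 2
      ≤ r * ∫ s in Ioc 1 r, s * ((‖L0op m z dz s‖ / s) ^ 2 * s) := by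
  have hr0 : 0 < r := by linarith
  have hL : MemLp (fun s => ‖L0op m z dz s‖) 2 (volume.restrict (Ioc 1 r)) := by
    simpa using memLp_weighted_L0op hz hG (b := r) one_pos (w := fun _ => 1) continuousOn_const
  have hi : IntegrableOn (fun s => ‖L0op m z dz s‖) (Ioc 1 r) := hL.integrable one_le_two
  have h1 : h1fInv m r * ‖z r - h1f m r * z 1‖
      ≤ h1fInv m r * ∫ s in Ioc 1 r, ‖L0op m z dz s‖ := by
    have : h1fInv m r * ‖z r - h1f m r * z 1‖
        = ‖(h1fInv m r : ℂ) * (z r - h1f m r * z 1)‖ := by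
      rw [norm_mul, Complex.norm_real, Real.norm_of_nonneg (h1fInv_pos hr0).le]
    rw [this, h1fInv_mul_sub hz hr0, intervalIntegral.integral_of_le hr, ← integral_const_mul]
    refine norm_integral_le_of_norm_le (hi.const_mul _) ?_
    filter_upwards [ae_restrict_mem measurableSet_Ioc] with s hs
    have hs0 : 0 < s := one_pos.trans hs.1
    rw [norm_mul, Complex.norm_real, Real.norm_of_nonneg (h1fInv_pos hs0).le]
    gcongr
    exact h1fInv_le_of_one_le hs.1.le hs.2
  replace h1 := le_of_mul_le_mul_left h1 (h1fInv_pos hr0)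
  have hcs := sq_integral_mul_le (μ := volume.restrict (Ioc 1 r)) (f := fun _ => (1 : ℝ))
    (ae_of_all _ fun _ => zero_le_one) (ae_of_all _ fun s => norm_nonneg (L0op m z dz s))
    (memLp_const 1) hL
  simp only [one_mul, one_pow, integral_const, smul_eq_mul, mul_one] at hcs
  have hvol : (volume.restrict (Ioc 1 r)).real univ = r - 1 := by
    rw [measureReal_restrict_apply_univ, Real.volume_real_Ioc_of_le hr]
  rw [hvol] at hcs
  have heq : ∫ s in Ioc 1 r, ‖L0op m z dz s‖ ^ 2
      = ∫ s in Ioc 1 r, s * ((‖L0op m z dz s‖ / s) ^ 2 * s) :=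
    setIntegral_congr_fun measurableSet_Ioc fun s hs => by
      have hs0 : 0 < s := one_pos.trans hs.1
      field_simp
  calc ‖z r - h1f m r * z 1‖ ^ 2 ≤ (∫ s in Ioc 1 r, ‖L0op m z dz s‖) ^ 2 := by gcongr
    _ ≤ (r - 1) * ∫ s in Ioc 1 r, ‖L0op m z dz s‖ ^ 2 := hcs
    _ ≤ r * ∫ s in Ioc 1 r, ‖L0op m z dz s‖ ^ 2 := by
        gcongr
        linarith
    _ = _ := by rw [heq]

lemma norm_sq_remainder_le_of_le_one (hm : 2 ≤ m) (hz : LocACC z dz)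
    (hG : IntegrableOn (fun s => (‖L0op m z dz s‖ / s) ^ 2 * s) (Ioi 0))
    {r : ℝ} (hr : 0 < r) (hr1 : r ≤ 1) :
    ‖z r - h1f m r * z 1‖ ^ 2
      ≤ 4 * r ^ 3 * ∫ s in Ioc r 1, s⁻¹ * ((‖L0op m z dz s‖ / s) ^ 2 * s) := by
  have hinv : ContinuousOn (fun s : ℝ => s⁻¹) (Ioi 0) :=
    continuousOn_id.inv₀ fun s (hs : 0 < s) => hs.ne'
  have hsub : Icc r 1 ⊆ Ioi 0 := fun s hs => hr.trans_le hs.1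
  have hL : MemLp (fun s => s⁻¹ * ‖L0op m z dz s‖) 2 (volume.restrict (Ioc r 1)) :=
    memLp_weighted_L0op hz hG hr hinv
  have hs2 : IntegrableOn (fun s : ℝ => s⁻¹ ^ 2) (Ioc r 1) :=
    (((hinv.pow 2).mono hsub).integrableOn_Icc).mono_set Ioc_subset_Icc_self
  have hI : MemLp (fun s : ℝ => s⁻¹) 2 (volume.restrict (Ioc r 1)) :=
    (memLp_two_iff_integrable_sq
      ((hinv.aestronglyMeasurable measurableSet_Ioi).mono_set fun s hs => hr.trans hs.1)).mpr hs2
  have hi : IntegrableOn (fun s => s⁻¹ * (s⁻¹ * ‖L0op m z dz s‖)) (Ioc r 1) :=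
    hI.integrable_mul hL
  have h1 : h1fInv m r * ‖z r - h1f m r * z 1‖
      ≤ h1fInv m r * (2 * r ^ 2 * ∫ s in Ioc r 1, s⁻¹ * (s⁻¹ * ‖L0op m z dz s‖)) := by
    have : h1fInv m r * ‖z r - h1f m r * z 1‖
        = ‖(h1fInv m r : ℂ) * (z r - h1f m r * z 1)‖ := by
      rw [norm_mul, Complex.norm_real, Real.norm_of_nonneg (h1fInv_pos hr).le]
    rw [this, h1fInv_mul_sub hz hr, intervalIntegral.integral_symm, norm_neg,
      intervalIntegral.integral_of_le hr1, ← mul_assoc, ← integral_const_mul]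
    refine norm_integral_le_of_norm_le (hi.const_mul _) ?_
    filter_upwards [ae_restrict_mem measurableSet_Ioc] with s hs
    have hs0 : 0 < s := hr.trans hs.1
    rw [norm_mul, Complex.norm_real, Real.norm_of_nonneg (h1fInv_pos hs0).le]
    calc h1fInv m s * ‖L0op m z dz s‖
        = s ^ 2 * h1fInv m s * (s⁻¹ * (s⁻¹ * ‖L0op m z dz s‖)) := by field_simp
      _ ≤ 2 * r ^ 2 * h1fInv m r * (s⁻¹ * (s⁻¹ * ‖L0op m z dz s‖)) := by
          exact mul_le_mul_of_nonneg_right (sq_mul_h1fInv_le hm hr hs.1.le hs.2) (by positivity)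
      _ = _ := by ring
  replace h1 := le_of_mul_le_mul_left h1 (h1fInv_pos hr)
  have hpos : ∀ᵐ s ∂(volume.restrict (Ioc r 1)), 0 < s :=
    (ae_restrict_mem measurableSet_Ioc).mono fun s hs => hr.trans hs.1
  have hcs := sq_integral_mul_le (hpos.mono fun s hs => (inv_pos.mpr hs).le)
    (hpos.mono fun s hs => mul_nonneg (inv_pos.mpr hs).le (norm_nonneg (L0op m z dz s))) hI hL
  have hval : ∫ s in Ioc r 1, s⁻¹ ^ 2 ≤ r⁻¹ := by
    have hd : ∀ s ∈ uIcc r 1, HasDerivAt (fun s : ℝ => -s⁻¹) (s⁻¹ ^ 2) s := fun s hs => by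
      rw [uIcc_of_le hr1] at hs
      have hs0 : s ≠ 0 := (hsub hs).ne'
      exact (hasDerivAt_inv hs0).neg.congr_deriv (by simp)
    have := intervalIntegral.integral_eq_sub_of_hasDerivAt hd
      ((intervalIntegrable_iff_integrableOn_Ioc_of_le hr1).mpr hs2)
    rw [← intervalIntegral.integral_of_le hr1, this]
    norm_num
  have heq : ∫ s in Ioc r 1, (s⁻¹ * ‖L0op m z dz s‖) ^ 2
      = ∫ s in Ioc r 1, s⁻¹ * ((‖L0op m z dz s‖ / s) ^ 2 * s) :=
    setIntegral_congr_fun measurableSet_Ioc fun s hs => by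
      have hs0 : 0 < s := hr.trans hs.1
      field_simp
  calc ‖z r - h1f m r * z 1‖ ^ 2
      ≤ (2 * r ^ 2 * ∫ s in Ioc r 1, s⁻¹ * (s⁻¹ * ‖L0op m z dz s‖)) ^ 2 := by gcongr
    _ = 4 * r ^ 4 * (∫ s in Ioc r 1, s⁻¹ * (s⁻¹ * ‖L0op m z dz s‖)) ^ 2 := by ring
    _ ≤ 4 * r ^ 4 * ((∫ s in Ioc r 1, s⁻¹ ^ 2) * ∫ s in Ioc r 1, (s⁻¹ * ‖L0op m z dz s‖) ^ 2) := by
        gcongr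
    _ ≤ 4 * r ^ 4 * (r⁻¹ * ∫ s in Ioc r 1, (s⁻¹ * ‖L0op m z dz s‖) ^ 2) := by
        gcongr
    _ = _ := by rw [heq]; field_simp

lemma norm_remainder_le (hm : 2 ≤ m) (hz : LocACC z dz)
    (hG : IntegrableOn (fun s => (‖L0op m z dz s‖ / s) ^ 2 * s) (Ioi 0)) {r : ℝ} (hr : 0 < r) :
    ‖z r - h1f m r * z 1‖
      ≤ 2 * √(∫ s in Ioi (0 : ℝ), (‖L0op m z dz s‖ / s) ^ 2 * s) * r := by
  set G : ℝ → ℝ := fun s => (‖L0op m z dz s‖ / s) ^ 2 * s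
  have hG0 : ∀ s, 0 < s → 0 ≤ G s := fun s hs => by positivity
  have aux : ∀ a b c : ℝ, 0 < a → ∀ k : ℝ → ℝ, (∀ s ∈ Ioc a b, 0 ≤ k s ∧ k s ≤ c) → 0 ≤ c →
      ∫ s in Ioc a b, k s * G s ≤ c * ∫ s in Ioi (0 : ℝ), G s := by
    intro a b c ha k hk hc
    have hsub : Ioc a b ⊆ Ioi 0 := fun s hs => ha.trans hs.1
    calc ∫ s in Ioc a b, k s * G s ≤ ∫ s in Ioc a b, c * G s := by
          refine integral_mono_of_nonneg ?_ ((hG.mono_set hsub).const_mul c) ?_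
          · filter_upwards [ae_restrict_mem measurableSet_Ioc] with s hs
            exact mul_nonneg (hk s hs).1 (hG0 s (hsub hs))
          · filter_upwards [ae_restrict_mem measurableSet_Ioc] with s hs
            exact mul_le_mul_of_nonneg_right (hk s hs).2 (hG0 s (hsub hs))
      _ = c * ∫ s in Ioc a b, G s := integral_const_mul _ _
      _ ≤ c * ∫ s in Ioi (0 : ℝ), G s := by
          refine mul_le_mul_of_nonneg_left (setIntegral_mono_set hG ?_ hsub.eventuallyLE) hc
          exact (ae_restrict_mem measurableSet_Ioi).mono hG0
  have hq : 0 ≤ ∫ s in Ioi (0 : ℝ), G s := setIntegral_nonneg measurableSet_Ioi hG0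
  refine le_of_sq_le_sq ?_ (by positivity)
  rw [mul_pow, mul_pow, Real.sq_sqrt hq]
  rcases le_total 1 r with h1 | h1
  · have h2 := aux 1 r r one_pos (fun s => s)
      (fun s hs => ⟨(one_pos.trans hs.1).le, hs.2⟩) hr.le
    calc _ ≤ r * ∫ s in Ioc 1 r, s * G s := norm_sq_remainder_le_of_one_le hz hG h1
      _ ≤ r * (r * ∫ s in Ioi (0 : ℝ), G s) := by gcongr
      _ ≤ _ := by nlinarith [mul_nonneg hq (sq_nonneg r)]
  · have h2 := aux r 1 r⁻¹ hr (fun s => s⁻¹)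
      (fun s hs => ⟨(inv_pos.mpr (hr.trans hs.1)).le, inv_anti₀ hr hs.1.le⟩) (by positivity)
    calc _ ≤ 4 * r ^ 3 * ∫ s in Ioc r 1, s⁻¹ * G s := norm_sq_remainder_le_of_le_one hm hz hG hr h1
      _ ≤ 4 * r ^ 3 * (r⁻¹ * ∫ s in Ioi (0 : ℝ), G s) := by gcongr
      _ = _ := by field_simp; ring

lemma lintegral_remainder_le (hm : 2 ≤ m) (hz : LocACC z dz)
    (hG : IntegrableOn (fun s => (‖L0op m z dz s‖ / s) ^ 2 * s) (Ioi 0)) :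
    ∫⁻ r in Ioi (0 : ℝ), ENNReal.ofReal (‖z r - h1f m r * z 1‖ ^ 2 / r ^ 3)
      ≤ 4 * ENNReal.ofReal (∫ s in Ioi (0 : ℝ), (‖L0op m z dz s‖ / s) ^ 2 * s) := by
  refine lintegral_le_of_hardy_bounds hG (fun s hs => by positivity) (fun r hr => ?_)
    (fun r hr hr1 => ?_)
  · have hr0 : 0 < r := one_pos.trans hr
    rw [div_le_iff₀ (by positivity)]
    refine (norm_sq_remainder_le_of_one_le hz hG hr.le).trans_eq ?_
    simp_rw [mul_comm _ (r ^ 2)⁻¹, mul_assoc (r ^ 2)⁻¹]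
    rw [integral_const_mul]
    field_simp
  · rw [div_le_iff₀ (by positivity)]
    refine (norm_sq_remainder_le_of_le_one hm hz hG hr hr1).trans_eq ?_
    simp_rw [mul_assoc (4 : ℝ)]
    rw [integral_const_mul]
    ring

/-- Under orthogonality to `h1f`, the value `z 1` is controlled by the remainder. -/
lemma norm_apply_one_mul_le (hm : 3 < m) (hz : LocACC z dz)
    (hG : IntegrableOn (fun s => (‖L0op m z dz s‖ / s) ^ 2 * s) (Ioi 0))
    (horth : (∫ r in Ioi (0 : ℝ), z r * ((h1f m r * r : ℝ) : ℂ)) = 0) :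
    ‖z 1‖ * ∫ r in Ioi (0 : ℝ), h1f m r ^ 2 * r
      ≤ 2 * √(∫ s in Ioi (0 : ℝ), (‖L0op m z dz s‖ / s) ^ 2 * s)
        * ∫ r in Ioi (0 : ℝ), r ^ 2 * h1f m r := by
  set q := √(∫ s in Ioi (0 : ℝ), (‖L0op m z dz s‖ / s) ^ 2 * s)
  have hdom : IntegrableOn (fun r => 2 * q * (r ^ 2 * h1f m r)) (Ioi 0) :=
    (integrableOn_h1f_mul_sq hm).const_mul _
  have hbound : ∀ᵐ r ∂(volume.restrict (Ioi (0 : ℝ))),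
      ‖(z r - h1f m r * z 1) * ((h1f m r * r : ℝ) : ℂ)‖ ≤ 2 * q * (r ^ 2 * h1f m r) := by
    filter_upwards [ae_restrict_mem measurableSet_Ioi] with r (hr : 0 < r)
    have hh := h1f_pos (m := m) hr
    rw [norm_mul, Complex.norm_real, Real.norm_of_nonneg (by positivity)]
    calc _ ≤ 2 * q * r * (h1f m r * r) := by
          gcongr
          exact norm_remainder_le (by omega) hz hG hr
      _ = _ := by ring
  have hofReal : ContinuousOn (fun r => (h1f m r : ℂ)) (Ioi 0) :=
    Complex.continuous_ofReal.comp_continuousOn (continuousOn_h1f m)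
  have hofReal' : ContinuousOn (fun r => ((h1f m r * r : ℝ) : ℂ)) (Ioi 0) :=
    Complex.continuous_ofReal.comp_continuousOn ((continuousOn_h1f m).mul continuousOn_id)
  have hu : IntegrableOn (fun r => (z r - h1f m r * z 1) * ((h1f m r * r : ℝ) : ℂ)) (Ioi 0) :=
    Integrable.mono' hdom
      (((hz.continuousOn.sub (hofReal.mul continuousOn_const)).mul hofReal').aestronglyMeasurable
        measurableSet_Ioi) hbound
  have hh : IntegrableOn (fun r => z 1 * ((h1f m r ^ 2 * r : ℝ) : ℂ)) (Ioi 0) :=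
    (integrableOn_h1f_sq_mul hm).ofReal.const_mul _
  have hsplit : (fun r => z r * ((h1f m r * r : ℝ) : ℂ)) = fun r =>
      (z r - h1f m r * z 1) * ((h1f m r * r : ℝ) : ℂ) + z 1 * ((h1f m r ^ 2 * r : ℝ) : ℂ) := by
    funext r; push_cast; ring
  rw [hsplit, integral_add hu hh, integral_const_mul, integral_complex_ofReal] at horth
  have h0 : 0 ≤ ∫ r in Ioi (0 : ℝ), h1f m r ^ 2 * r :=
    setIntegral_nonneg measurableSet_Ioi fun r (hr : 0 < r) => by positivity
  calc ‖z 1‖ * ∫ r in Ioi (0 : ℝ), h1f m r ^ 2 * r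
      = ‖z 1 * ((∫ r in Ioi (0 : ℝ), h1f m r ^ 2 * r : ℝ) : ℂ)‖ := by
        rw [norm_mul, Complex.norm_real, Real.norm_of_nonneg h0]
    _ = ‖∫ r in Ioi (0 : ℝ), (z r - h1f m r * z 1) * ((h1f m r * r : ℝ) : ℂ)‖ := by
        rw [eq_neg_of_add_eq_zero_right horth, norm_neg]
    _ ≤ ∫ r in Ioi (0 : ℝ), 2 * q * (r ^ 2 * h1f m r) := norm_integral_le_of_norm_le hdom hbound
    _ = _ := integral_const_mul _ _

lemma integral_sq_le (hm : 3 < m) (hz : LocACC z dz)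
    (hG : IntegrableOn (fun s => (‖L0op m z dz s‖ / s) ^ 2 * s) (Ioi 0))
    (hZ : IntegrableOn (fun r => (‖z r‖ / r ^ 2) ^ 2 * r) (Ioi 0)) :
    ∫ r in Ioi (0 : ℝ), (‖z r‖ / r ^ 2) ^ 2 * r
      ≤ 2 * ‖z 1‖ ^ 2 * (∫ r in Ioi (0 : ℝ), h1f m r ^ 2 / r ^ 3)
        + 8 * ∫ s in Ioi (0 : ℝ), (‖L0op m z dz s‖ / s) ^ 2 * s := by
  set q := ∫ s in Ioi (0 : ℝ), (‖L0op m z dz s‖ / s) ^ 2 * s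
  have hq : 0 ≤ q := setIntegral_nonneg measurableSet_Ioi fun r (hr : 0 < r) => by positivity
  have hH : IntegrableOn (fun r => 2 * ‖z 1‖ ^ 2 * (h1f m r ^ 2 / r ^ 3)) (Ioi 0) :=
    (integrableOn_h1f_sq_div hm).const_mul _
  have hH0 : ∀ r : ℝ, 0 < r → 0 ≤ 2 * ‖z 1‖ ^ 2 * (h1f m r ^ 2 / r ^ 3) :=
    fun r hr => by positivity
  have hH' : 0 ≤ ∫ r in Ioi (0 : ℝ), 2 * ‖z 1‖ ^ 2 * (h1f m r ^ 2 / r ^ 3) :=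
    setIntegral_nonneg measurableSet_Ioi hH0
  rw [← integral_const_mul]
  rw [← ENNReal.ofReal_le_ofReal_iff (by positivity), ENNReal.ofReal_add hH' (by positivity),
    ofReal_integral_eq_lintegral_ofReal hZ
      ((ae_restrict_mem measurableSet_Ioi).mono fun r (hr : 0 < r) => by positivity),
    ofReal_integral_eq_lintegral_ofReal hH ((ae_restrict_mem measurableSet_Ioi).mono hH0)]
  calc ∫⁻ r in Ioi (0 : ℝ), ENNReal.ofReal ((‖z r‖ / r ^ 2) ^ 2 * r)
      ≤ ∫⁻ r in Ioi (0 : ℝ), (ENNReal.ofReal (2 * ‖z 1‖ ^ 2 * (h1f m r ^ 2 / r ^ 3))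
          + 2 * ENNReal.ofReal (‖z r - h1f m r * z 1‖ ^ 2 / r ^ 3)) := by
        refine setLIntegral_mono' measurableSet_Ioi fun r (hr : 0 < r) => ?_
        have h2 : (2 : ℝ≥0∞) = ENNReal.ofReal 2 := by norm_num
        rw [h2, ← ENNReal.ofReal_mul zero_le_two,
          ← ENNReal.ofReal_add (hH0 r hr) (by positivity)]
        refine ENNReal.ofReal_le_ofReal ?_
        have htri : ‖z r‖ ≤ ‖z r - h1f m r * z 1‖ + h1f m r * ‖z 1‖ := by
          have := norm_add_le (z r - h1f m r * z 1) (h1f m r * z 1)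
          rwa [sub_add_cancel, norm_mul, Complex.norm_real,
            Real.norm_of_nonneg (h1f_pos hr).le] at this
        have hsq : ‖z r‖ ^ 2
            ≤ 2 * ‖z 1‖ ^ 2 * h1f m r ^ 2 + 2 * ‖z r - h1f m r * z 1‖ ^ 2 := by
          have := pow_le_pow_left₀ (norm_nonneg _) htri 2
          nlinarith [sq_nonneg (‖z r - h1f m r * z 1‖ - h1f m r * ‖z 1‖)]
        calc (‖z r‖ / r ^ 2) ^ 2 * r = ‖z r‖ ^ 2 / r ^ 3 := by field_simp
          _ ≤ (2 * ‖z 1‖ ^ 2 * h1f m r ^ 2 + 2 * ‖z r - h1f m r * z 1‖ ^ 2) / r ^ 3 := by gcongr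
          _ = _ := by ring
    _ = (∫⁻ r in Ioi (0 : ℝ), ENNReal.ofReal (2 * ‖z 1‖ ^ 2 * (h1f m r ^ 2 / r ^ 3)))
          + 2 * ∫⁻ r in Ioi (0 : ℝ), ENNReal.ofReal (‖z r - h1f m r * z 1‖ ^ 2 / r ^ 3) := by
        rw [lintegral_add_left' hH.1.aemeasurable.ennreal_ofReal,
          lintegral_const_mul' _ _ (by norm_num)]
    _ ≤ _ := by
        gcongr
        refine (mul_le_mul_right (lintegral_remainder_le (by omega) hz hG) 2).trans_eq ?_
        rw [← mul_assoc, ENNReal.ofReal_mul (by norm_num)]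
        norm_num
        rfl

lemma norm_L0op_le (r : ℝ) (hr : 0 < r) : ‖L0op m z dz r‖ ≤ ‖dz r‖ + m / r * ‖z r‖ := by
  refine (norm_add_le _ _).trans ?_
  rw [norm_mul, Complex.norm_real, Real.norm_eq_abs, abs_mul, abs_of_nonneg (by positivity)]
  gcongr
  exact mul_le_of_le_one_right (by positivity) (abs_h3f_le_one m hr)

lemma norm_deriv_le (r : ℝ) (hr : 0 < r) : ‖dz r‖ ≤ ‖L0op m z dz r‖ + m / r * ‖z r‖ := by
  have : dz r = L0op m z dz r - (((m : ℝ) / r * h3f m r : ℝ) : ℂ) * z r := by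
    simp [L0op]
  refine (congrArg norm this).trans_le ((norm_sub_le _ _).trans ?_)
  rw [norm_mul, Complex.norm_real, Real.norm_eq_abs, abs_mul, abs_of_nonneg (by positivity)]
  gcongr
  exact mul_le_of_le_one_right (by positivity) (abs_h3f_le_one m hr)

lemma integrableOn_L0op_sq (hz : LocACC z dz)
    (hD : IntegrableOn (fun r => (‖dz r‖ / r) ^ 2 * r) (Ioi (0 : ℝ)))
    (hZ : IntegrableOn (fun r => (‖z r‖ / r ^ 2) ^ 2 * r) (Ioi (0 : ℝ))) :
    IntegrableOn (fun r => (‖L0op m z dz r‖ / r) ^ 2 * r) (Ioi (0 : ℝ)) := by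
  refine Integrable.mono' ((hD.const_mul 2).add (hZ.const_mul (2 * (m : ℝ) ^ 2))) ?_ ?_
  · have h := (hz.aestronglyMeasurable_L0op m).norm.aemeasurable
    exact (((h.div aemeasurable_id).pow_const 2).mul aemeasurable_id).aestronglyMeasurable
  · filter_upwards [ae_restrict_mem measurableSet_Ioi] with r (hr : 0 < r)
    have h1 : ‖L0op m z dz r‖ / r ≤ ‖dz r‖ / r + m * (‖z r‖ / r ^ 2) := by
      rw [div_le_iff₀ hr]
      refine (norm_L0op_le r hr).trans_eq ?_
      field_simp
    rw [Real.norm_of_nonneg (by positivity)]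
    have h2 := pow_le_pow_left₀ (by positivity) h1 2
    simp only [Pi.add_apply]
    nlinarith [mul_nonneg hr.le (sq_nonneg (‖dz r‖ / r - m * (‖z r‖ / r ^ 2))),
      mul_le_mul_of_nonneg_right h2 hr.le]

end Remainder

/-- **Weighted coercivity of L₀ under orthogonality to h₁.** For m > 3 there is
C = C(m) such that if z has finite X-norm, z'/ρ and z/ρ² lie in L²(ρ dρ), and
∫ z h₁ ρ dρ = 0, then ‖|z'|/ρ + |z|/ρ²‖_{L²(ρ dρ)} ≤ C ‖(L₀z)/ρ‖_{L²(ρ dρ)}. -/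
theorem statement11 (m : ℕ) (hm : 3 < m) :
    ∃ C > (0:ℝ), ∀ z dz : ℝ → ℂ,
      LocACC z dz →
      IntegrableOn (xDen z dz) (Ioi (0:ℝ)) →
      IntegrableOn (fun ρ => (‖dz ρ‖ / ρ) ^ 2 * ρ) (Ioi (0:ℝ)) →
      IntegrableOn (fun ρ => (‖z ρ‖ / ρ ^ 2) ^ 2 * ρ) (Ioi (0:ℝ)) →
      (∫ ρ in Ioi (0:ℝ), z ρ * ((h1f m ρ * ρ : ℝ) : ℂ)) = 0 →
      Real.sqrt (∫ ρ in Ioi (0:ℝ), (‖dz ρ‖ / ρ + ‖z ρ‖ / ρ ^ 2) ^ 2 * ρ)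
        ≤ C * Real.sqrt (∫ ρ in Ioi (0:ℝ), (‖L0op m z dz ρ‖ / ρ) ^ 2 * ρ) := by
  set I := ∫ r in Ioi (0 : ℝ), h1f m r ^ 2 * r with hI
  set J := ∫ r in Ioi (0 : ℝ), r ^ 2 * h1f m r
  set H := ∫ r in Ioi (0 : ℝ), h1f m r ^ 2 / r ^ 3
  have hIpos : 0 < I := by
    rw [hI, setIntegral_pos_iff_support_of_nonneg_ae
      ((ae_restrict_mem measurableSet_Ioi).mono fun r (hr : 0 < r) => by positivity)
      (integrableOn_h1f_sq_mul hm)]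
    have : Ioi (0 : ℝ) ⊆ Function.support (fun r => h1f m r ^ 2 * r) := fun r (hr : 0 < r) =>
      (mul_pos (pow_pos (h1f_pos hr) 2) hr).ne'
    rw [inter_eq_self_of_subset_right this]
    simp
  have hHnn : 0 ≤ H :=
    setIntegral_nonneg measurableSet_Ioi fun r (hr : 0 < r) => by positivity
  set K := 2 + 2 * ((m : ℝ) + 1) ^ 2 * (2 * (2 * J / I) ^ 2 * H + 8) with hK
  have hKpos : 0 < K := by positivity
  refine ⟨√K, Real.sqrt_pos.mpr hKpos, fun z dz hz _ hD hZ horth => ?_⟩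
  have hG := integrableOn_L0op_sq (m := m) hz hD hZ
  rw [← Real.sqrt_mul hKpos.le]
  refine Real.sqrt_le_sqrt ?_
  have hz1 := norm_apply_one_mul_le hm hz hG horth
  have hZle := integral_sq_le hm hz hG hZ
  set q := ∫ ρ in Ioi (0 : ℝ), (‖L0op m z dz ρ‖ / ρ) ^ 2 * ρ
  have hqnn : 0 ≤ q :=
    setIntegral_nonneg measurableSet_Ioi fun r (hr : 0 < r) => by positivity
  have hz1sq : ‖z 1‖ ^ 2 ≤ (2 * J / I) ^ 2 * q := by
    have h1 : ‖z 1‖ ≤ 2 * J / I * √q := by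
      rw [div_mul_eq_mul_div, le_div_iff₀ hIpos]
      linarith
    calc ‖z 1‖ ^ 2 ≤ (2 * J / I * √q) ^ 2 := pow_le_pow_left₀ (norm_nonneg _) h1 2
      _ = _ := by rw [mul_pow, Real.sq_sqrt hqnn]
  calc ∫ ρ in Ioi (0 : ℝ), (‖dz ρ‖ / ρ + ‖z ρ‖ / ρ ^ 2) ^ 2 * ρ
      ≤ ∫ ρ in Ioi (0 : ℝ), (2 * ((‖L0op m z dz ρ‖ / ρ) ^ 2 * ρ)
          + 2 * ((m : ℝ) + 1) ^ 2 * ((‖z ρ‖ / ρ ^ 2) ^ 2 * ρ)) := by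
        refine integral_mono_of_nonneg ?_ ((hG.const_mul _).add (hZ.const_mul _)) ?_
        · exact (ae_restrict_mem measurableSet_Ioi).mono fun r (hr : 0 < r) => by positivity
        · filter_upwards [ae_restrict_mem measurableSet_Ioi] with r (hr : 0 < r)
          have h1 : ‖dz r‖ / r + ‖z r‖ / r ^ 2
              ≤ ‖L0op m z dz r‖ / r + ((m : ℝ) + 1) * (‖z r‖ / r ^ 2) := by
            have : ‖dz r‖ / r ≤ ‖L0op m z dz r‖ / r + m * (‖z r‖ / r ^ 2) := by
              rw [div_le_iff₀ hr]
              refine (norm_deriv_le (m := m) (z := z) r hr).trans_eq ?_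
              field_simp
            linarith
          have h2 := pow_le_pow_left₀ (by positivity) h1 2
          nlinarith [mul_nonneg hr.le (sq_nonneg (‖L0op m z dz r‖ / r
            - ((m : ℝ) + 1) * (‖z r‖ / r ^ 2))), mul_le_mul_of_nonneg_right h2 hr.le]
    _ = 2 * q + 2 * ((m : ℝ) + 1) ^ 2 * ∫ ρ in Ioi (0 : ℝ), (‖z ρ‖ / ρ ^ 2) ^ 2 * ρ := by
        rw [integral_add (hG.const_mul _) (hZ.const_mul _), integral_const_mul,
          integral_const_mul]
    _ ≤ 2 * q + 2 * ((m : ℝ) + 1) ^ 2 * (2 * ((2 * J / I) ^ 2 * q) * H + 8 * q) := by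
        gcongr
        exact hZle.trans (by gcongr)
    _ = K * q := by rw [hK]; ring

end
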